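/- Let t ≥ 1 and k₁, …, k_t ≥ 0 be integers, and let D* be the connected functional digraph obtained from a directed cycle on vertices y₁, …, y_t by attaching, for each 1 ≤ i ≤ t, a disjoint directed path x_{i,1} → x_{i,2} → … → x_{i,2k_i+1} together with the arc (x_{i,2k_i+1}, y_i). Then γ₁ᵒ(D*) = ⌊(n + q + 1)/2⌋, where n is the order of D* and q = t is its number of sources; in particular the bound γ₁ᵒ(D) ≤ ⌊(n + q + 1)/2⌋ for connected functional digraphs is sharp. -/

import Mathlib

open Finset

variable {V : Type*}

/-- In-degree of `v` from the set `T` in the digraph with arc relation `A`. -/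
def inDegOn [Fintype V] (A : V → V → Prop) [DecidableRel A] (T : Finset V) (v : V) : ℕ :=
  (T.filter fun u => A u v).card

/-- `S` is a global offensive `k`-alliance in the digraph with arc relation `A`. -/
def GOkA [Fintype V] [DecidableEq V] (A : V → V → Prop) [DecidableRel A] (k : ℤ)
    (S : Finset V) : Prop :=
  ∀ v ∉ S, (∃ u ∈ S, A u v) ∧ ((inDegOn A Sᶜ v : ℤ) + k ≤ (inDegOn A S v : ℤ))

/-- The global offensive `k`-alliance number of a digraph. -/
noncomputable def goNum [Fintype V] [DecidableEq V] (A : V → V → Prop) [DecidableRel A]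
    (k : ℤ) : ℕ :=
  sInf {m | ∃ S : Finset V, GOkA A k S ∧ S.card = m}

/-- The arc relation of the connected functional digraph `D*` obtained from a directed cycle
on `y₁, …, y_t` (the left summand, `yᵢ → yᵢ₊₁` cyclically) by attaching, for each `i`, a
directed path `x_{i,1} → ⋯ → x_{i,2kᵢ+1}` (the right summand) together with the arc
`(x_{i,2kᵢ+1}, yᵢ)`. -/
def DstarArc (t : ℕ) (k : Fin t → ℕ) :
    (Fin t ⊕ (Σ i : Fin t, Fin (2 * k i + 1))) →
      (Fin t ⊕ (Σ i : Fin t, Fin (2 * k i + 1))) → Prop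
  | Sum.inl i, Sum.inl j => (j : ℕ) = ((i : ℕ) + 1) % t
  | Sum.inr ⟨i, a⟩, Sum.inr ⟨j, b⟩ => (i : ℕ) = (j : ℕ) ∧ (b : ℕ) = (a : ℕ) + 1
  | Sum.inr ⟨i, a⟩, Sum.inl j => i = j ∧ (a : ℕ) = 2 * k i
  | Sum.inl _, Sum.inr _ => False

instance (t : ℕ) (k : Fin t → ℕ) : DecidableRel (DstarArc t k) := fun u v => by
  rcases u with i | ⟨i, a⟩ <;> rcases v with j | ⟨j, b⟩ <;>
    simp only [DstarArc] <;> infer_instance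

/-!
Every vertex of `D*` has in-degree at most 2, and a vertex of in-degree at most 2 meets the
alliance condition exactly when it has an in-neighbour and all its in-neighbours lie in `S`.

Split `D*` into its cycle and its `t` pendant paths. A vertex that is not a source has an
in-neighbour in its own part, so an alliance dominates each part from within; as out-degrees are at
most 1, it contains at least half of each part, that is, `⌈t/2⌉` cycle vertices and `kᵢ + 1`
vertices of the `i`-th path. Conversely, the vertices at even position, counted from `0` in each
part, form an alliance: each `yᵢ` is entered from its path at the even position `2kᵢ`, and when `t`
is odd two consecutive cycle vertices lie in the alliance, which does no harm.
-/

theorem card_filter_even_range (n : ℕ) : #{a ∈ range n | Even a} = (n + 1) / 2 := by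
  induction n with
  | zero => simp
  | succ n ih =>
    rw [range_add_one, filter_insert]
    split_ifs with hn
    · rw [card_insert_of_notMem (by simp), ih]
      grind
    · grind

section Digraph

variable {A : V → V → Prop}

theorem card_le_two_mul_card_inter_of_dominates [DecidableEq V] (hA : Relator.RightUnique A)
    {W S : Finset V} (hS : ∀ v ∈ W \ S, ∃ u ∈ W ∩ S, A u v) : #W ≤ 2 * #(W ∩ S) := by
  have hcard : #(W \ S) ≤ #(W ∩ S) :=
    card_le_card_of_forall_subsingleton' A hS fun _ _ _ hv _ hw ↦ hA hv.2 hw.2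
  have hsplit := card_inter_add_card_sdiff W S
  lia

variable [Fintype V] [DecidableRel A]

theorem inDegOn_eq_zero {T : Finset V} {v : V} : inDegOn A T v = 0 ↔ ∀ u ∈ T, ¬ A u v := by
  simp only [inDegOn, card_eq_zero, filter_eq_empty_iff]

variable [DecidableEq V]

theorem inDegOn_add_inDegOn_compl (S : Finset V) (v : V) :
    inDegOn A S v + inDegOn A Sᶜ v = inDegOn A univ v := by
  rw [inDegOn, inDegOn, inDegOn, ← union_compl S, filter_union,
    card_union_of_disjoint (disjoint_filter_filter disjoint_compl_right)]

theorem GOkA_one_iff_of_inDegOn_le_two (hA : ∀ v, inDegOn A univ v ≤ 2) {S : Finset V} :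
    GOkA A 1 S ↔ ∀ v ∉ S, (∃ u, A u v) ∧ ∀ u, A u v → u ∈ S := by
  refine forall₂_congr fun v _ ↦ ?_
  have hadd := inDegOn_add_inDegOn_compl (A := A) S v
  have hcompl : inDegOn A Sᶜ v = 0 ↔ ∀ u, A u v → u ∈ S := by
    simp only [inDegOn_eq_zero, mem_compl]
    exact forall_congr' fun _ ↦ not_imp_not
  constructor
  · rintro ⟨⟨u, -, hu⟩, hdeg⟩
    have := hA v
    exact ⟨⟨u, hu⟩, hcompl.1 (by lia)⟩
  · rintro ⟨⟨u, hu⟩, hall⟩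
    have hpos : inDegOn A S v ≠ 0 := fun h ↦ inDegOn_eq_zero.1 h u (hall u hu) hu
    have := hcompl.2 hall
    exact ⟨⟨u, hall u hu, hu⟩, by lia⟩

end Digraph

/-- The vertices of `D*`: `Sum.inl i` is the cycle vertex `yᵢ` and `Sum.inr ⟨i, a⟩` is the path
vertex `x_{i,a+1}`. -/
abbrev DstarVertex {t : ℕ} (k : Fin t → ℕ) : Type := Fin t ⊕ (Σ i : Fin t, Fin (2 * k i + 1))

namespace DstarVertex

variable {t : ℕ} {k : Fin t → ℕ}

/-- The part of `D*` containing a vertex: `none` is the cycle, `some i` is the `i`-th path. -/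
def part : DstarVertex k → Option (Fin t)
  | Sum.inl _ => none
  | Sum.inr ⟨i, _⟩ => some i

/-- The position of a vertex within its part, counted from `0`. -/
def pos : DstarVertex k → ℕ
  | Sum.inl i => i
  | Sum.inr ⟨_, a⟩ => a

variable (k) in
/-- The number of vertices in each part of `D*`. -/
def partSize : Option (Fin t) → ℕ
  | none => t
  | some i => 2 * k i + 1

theorem ext_part_pos : ∀ {u v : DstarVertex k}, part u = part v → pos u = pos v → u = v
  | Sum.inl _, Sum.inl _, _, hpos => congrArg Sum.inl (Fin.ext hpos)
  | Sum.inr ⟨_, _⟩, Sum.inr ⟨_, _⟩, hpart, hpos => by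
    cases hpart
    cases Fin.ext hpos
    rfl

theorem card_filter_pos_and_part_eq (p : ℕ → Prop) [DecidablePred p] (o : Option (Fin t)) :
    #{v : DstarVertex k | p (pos v) ∧ part v = o} = #{a ∈ range (partSize k o) | p a} := by
  refine card_nbij pos ?_ (fun u hu v hv huv ↦ ?_) fun a ha ↦ ?_
  · rintro (i | ⟨i, a⟩) hv <;> obtain ⟨hp, rfl⟩ := (mem_filter_univ _).1 hv
    · exact mem_filter.2 ⟨mem_range.2 i.isLt, hp⟩
    · exact mem_filter.2 ⟨mem_range.2 a.isLt, hp⟩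
  · exact ext_part_pos (((mem_filter_univ _).1 hu).2.trans ((mem_filter_univ _).1 hv).2.symm) huv
  · obtain ⟨hlt, hp⟩ := mem_filter.1 (mem_coe.1 ha)
    rcases o with _ | i
    · exact ⟨Sum.inl ⟨a, mem_range.1 hlt⟩, (mem_filter_univ _).2 ⟨hp, rfl⟩, rfl⟩
    · exact ⟨Sum.inr ⟨i, a, mem_range.1 hlt⟩, (mem_filter_univ _).2 ⟨hp, rfl⟩, rfl⟩

theorem card_filter_part_eq (o : Option (Fin t)) :
    #{v : DstarVertex k | part v = o} = partSize k o := by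
  simpa only [true_and, filter_true, card_range] using
    card_filter_pos_and_part_eq (k := k) (fun _ ↦ True) o

theorem sum_partSize_add_one_div_two_eq :
    ∑ o, (partSize k o + 1) / 2 = (Fintype.card (DstarVertex k) + t + 1) / 2 := by
  have hpath (i : Fin t) : (2 * k i + 1 + 1) / 2 = k i + 1 := by lia
  simp only [partSize, Fintype.sum_option, hpath, Fintype.card_sum, Fintype.card_sigma,
    Fintype.card_fin, sum_add_distrib, ← mul_sum, sum_const, card_univ, smul_eq_mul, mul_one]
  lia

end DstarVertex

namespace DstarArc

open DstarVertex

variable {t : ℕ} {k : Fin t → ℕ}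

theorem inl_inl_iff [NeZero t] {i j : Fin t} :
    DstarArc t k (Sum.inl i) (Sum.inl j) ↔ j = i + 1 := by
  rw [Fin.ext_iff, Fin.val_add, Fin.val_one', Nat.add_mod_mod]
  rfl

theorem rightUnique : Relator.RightUnique (DstarArc t k)
  | Sum.inl _, Sum.inl _, Sum.inl _, h, h' => ext_part_pos rfl (h.trans h'.symm)
  | Sum.inr _, Sum.inl _, Sum.inl _, ⟨hi, _⟩, ⟨hi', _⟩ => congrArg Sum.inl (hi.symm.trans hi')
  | Sum.inr _, Sum.inr _, Sum.inr _, ⟨hi, ha⟩, ⟨hi', ha'⟩ =>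
    ext_part_pos (congrArg some (Fin.ext (hi.symm.trans hi'))) (ha.trans ha'.symm)
  | Sum.inr ⟨i, a⟩, Sum.inl _, Sum.inr ⟨j, b⟩, ⟨_, ha⟩, ⟨hi', ha'⟩ => by
    cases Fin.ext hi'
    lia
  | Sum.inr ⟨i, a⟩, Sum.inr ⟨j, b⟩, Sum.inl _, ⟨hi', ha'⟩, ⟨_, ha⟩ => by
    cases Fin.ext hi'
    lia

theorem eq_of_isLeft_eq [NeZero t] {v : DstarVertex k} :
    ∀ {u u' : DstarVertex k}, DstarArc t k u v → DstarArc t k u' v → u.isLeft = u'.isLeft → u = u'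
  | Sum.inl i, Sum.inl i', h, h', _ => by
    rcases v with j | _
    · exact congrArg Sum.inl
        (add_right_cancel ((inl_inl_iff.1 h).symm.trans (inl_inl_iff.1 h')))
    · exact h.elim
  | Sum.inr ⟨i, a⟩, Sum.inr ⟨i', a'⟩, h, h', _ => by
    rcases v with j | ⟨j, b⟩
    · obtain ⟨rfl, ha⟩ := h
      obtain ⟨rfl, ha'⟩ := h'
      exact ext_part_pos rfl (ha.trans ha'.symm)
    · exact ext_part_pos (congrArg some (Fin.ext (h.1.trans h'.1.symm)))
        (Nat.succ_injective (h.2.symm.trans h'.2))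

theorem inDegOn_univ_le_two [NeZero t] (v : DstarVertex k) :
    inDegOn (DstarArc t k) univ v ≤ 2 := by
  refine card_le_card_of_injOn (t := univ) Sum.isLeft (fun _ _ ↦ mem_univ _) fun u hu u' hu' ↦ ?_
  exact eq_of_isLeft_eq (mem_filter.1 hu).2 (mem_filter.1 hu').2

theorem GOkA_one_iff [NeZero t] {S : Finset (DstarVertex k)} :
    GOkA (DstarArc t k) 1 S ↔
      ∀ v ∉ S, (∃ u, DstarArc t k u v) ∧ ∀ u, DstarArc t k u v → u ∈ S :=
  GOkA_one_iff_of_inDegOn_le_two inDegOn_univ_le_two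

theorem forall_not_iff_exists_inr_zero_eq {v : DstarVertex k} :
    (∀ u, ¬ DstarArc t k u v) ↔ ∃ i, Sum.inr ⟨i, 0⟩ = v := by
  constructor
  · intro hv
    rcases v with j | ⟨j, b, hb⟩
    · exact (hv (Sum.inr ⟨j, Fin.last _⟩) ⟨rfl, rfl⟩).elim
    · rcases b with _ | b
      · exact ⟨j, rfl⟩
      · exact (hv (Sum.inr ⟨j, b, by lia⟩) ⟨rfl, rfl⟩).elim
  · rintro ⟨i, rfl⟩ (_ | ⟨_, a⟩) hu
    · exact hu
    · exact Nat.succ_ne_zero _ hu.2.symm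

theorem card_sources :
    #{v : DstarVertex k | inDegOn (DstarArc t k) univ v = 0} = t := by
  have hsources : ({v | inDegOn (DstarArc t k) univ v = 0} : Finset (DstarVertex k)) =
      univ.image fun i ↦ Sum.inr ⟨i, 0⟩ := by
    ext v
    simp only [inDegOn_eq_zero, mem_filter_univ, mem_univ, true_imp_iff, mem_image, true_and,
      forall_not_iff_exists_inr_zero_eq]
  have hinj : Function.Injective fun i ↦ (Sum.inr ⟨i, 0⟩ : DstarVertex k) :=
    fun i j hij ↦ congrArg Sigma.fst (Sum.inr_injective hij)
  rw [hsources, card_image_of_injective _ hinj, card_univ, Fintype.card_fin]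

theorem exists_part_eq [NeZero t] {u v : DstarVertex k} (h : DstarArc t k u v) :
    ∃ w, DstarArc t k w v ∧ part w = part v := by
  rcases v with j | ⟨j, b⟩
  · exact ⟨Sum.inl (j - 1), inl_inl_iff.2 (sub_add_cancel j 1).symm, rfl⟩
  · rcases u with i | ⟨i, a⟩
    · exact h.elim
    · exact ⟨_, h, congrArg some (Fin.ext h.1)⟩

theorem even_pos_of_odd_pos [NeZero t] {u v : DstarVertex k} (h : DstarArc t k u v)
    (hv : Odd (pos v)) : Even (pos u) := by
  rcases u with i | ⟨i, a⟩ <;> rcases v with j | ⟨j, b⟩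
  · have hj : j ≠ 0 := by
      rintro rfl
      exact Nat.not_odd_zero hv
    obtain rfl : i = j - 1 := eq_sub_of_add_eq (inl_inl_iff.1 h).symm
    change Even (j - 1 : Fin t).val
    rw [Fin.val_sub_one_of_ne_zero hj]
    exact Nat.Odd.sub_odd hv odd_one
  · exact h.elim
  · have ha : a.val = 2 * k i := h.2
    change Even a.val
    rw [ha]
    exact even_two_mul (k i)
  · have hb : b.val = a.val + 1 := h.2
    have hodd : Odd (a.val + 1) := hb ▸ hv
    exact Nat.not_odd_iff_even.1 (Nat.odd_add_one.1 hodd)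

theorem sum_partSize_add_one_div_two_le_card [NeZero t] {S : Finset (DstarVertex k)}
    (hS : GOkA (DstarArc t k) 1 S) : ∑ o, (partSize k o + 1) / 2 ≤ #S := by
  rw [card_eq_sum_card_fiberwise (f := part) (t := univ) fun _ _ ↦ mem_univ _]
  refine sum_le_sum fun o _ ↦ ?_
  have hhalf : partSize k o ≤ 2 * #{v ∈ S | part v = o} := by
    have hinter : ({v | part v = o} : Finset (DstarVertex k)) ∩ S = {v ∈ S | part v = o} := by
      rw [filter_inter, univ_inter]
    rw [← card_filter_part_eq, ← hinter]
    refine card_le_two_mul_card_inter_of_dominates rightUnique fun v hv ↦ ?_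
    simp only [mem_sdiff, mem_inter, mem_filter_univ] at hv ⊢
    obtain ⟨rfl, hvS⟩ := hv
    obtain ⟨⟨u, hu⟩, hall⟩ := GOkA_one_iff.1 hS v hvS
    obtain ⟨w, hw, hwv⟩ := exists_part_eq hu
    exact ⟨w, ⟨hwv, hall w hw⟩, hw⟩
  lia

theorem GOkA_filter_even_pos [NeZero t] :
    GOkA (DstarArc t k) 1 {v : DstarVertex k | Even (pos v)} := by
  refine GOkA_one_iff.2 fun v hv ↦ ?_
  rw [mem_filter_univ, Nat.not_even_iff_odd] at hv
  refine ⟨?_, fun u hu ↦ (mem_filter_univ u).2 (even_pos_of_odd_pos hu hv)⟩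
  by_contra! hsource
  obtain ⟨i, rfl⟩ := forall_not_iff_exists_inr_zero_eq.1 hsource
  exact Nat.not_odd_zero hv

theorem card_filter_even_pos_eq_sum :
    #{v : DstarVertex k | Even (pos v)} = ∑ o, (partSize k o + 1) / 2 := by
  rw [card_eq_sum_card_fiberwise (f := part) (t := univ) fun _ _ ↦ mem_univ _]
  refine sum_congr rfl fun o _ ↦ ?_
  rw [filter_filter, card_filter_pos_and_part_eq, card_filter_even_range]

end DstarArc

/-- For the connected functional digraph `D*` (a directed cycle `y₁, …, y_t` with a directed
path on `2kᵢ + 1` vertices attached to each `yᵢ`), the number of sources is `q = t` and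
`γ₁ᵒ(D*) = ⌊(n + q + 1)/2⌋`; hence the bound `γ₁ᵒ(D) ≤ ⌊(n + q + 1)/2⌋` for connected
functional digraphs is sharp. -/
theorem goNum_Dstar_sharp (t : ℕ) (ht : 1 ≤ t) (k : Fin t → ℕ) :
    (univ.filter fun v : Fin t ⊕ (Σ i : Fin t, Fin (2 * k i + 1)) =>
        inDegOn (DstarArc t k) univ v = 0).card = t ∧
    goNum (DstarArc t k) 1 =
      (Fintype.card (Fin t ⊕ (Σ i : Fin t, Fin (2 * k i + 1))) + t + 1) / 2 := by
  have : NeZero t := ⟨Nat.one_le_iff_ne_zero.1 ht⟩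
  refine ⟨DstarArc.card_sources, ?_⟩
  have hleast : IsLeast {m | ∃ S : Finset (DstarVertex k), GOkA (DstarArc t k) 1 S ∧ #S = m}
      (∑ o, (DstarVertex.partSize k o + 1) / 2) := by
    refine ⟨⟨_, DstarArc.GOkA_filter_even_pos, DstarArc.card_filter_even_pos_eq_sum⟩, ?_⟩
    rintro _ ⟨S, hS, rfl⟩
    exact DstarArc.sum_partSize_add_one_div_two_le_card hS
  exact hleast.csInf_eq.trans DstarVertex.sum_partSize_add_one_div_two_eq
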